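/- arXiv:1210.7621 — 2 statements merged into one kernel-verified Lean document; each statement's English description precedes it below -/
import Mathlib

section
/- Let S_0, S_1, S_2, S_3, S_4 be five sets of five points each in ℝ^4 such that every 5-element subset of S_0 ∪ S_1 ∪ S_2 ∪ S_3 ∪ S_4 ∪ {0} is affinely independent (general position) and the origin 0 lies in the interior of the convex hull of S_i for each i = 0,1,2,3,4. Then the number of colourful simplices containing the origin, i.e. the number of tuples (x_0,x_1,x_2,x_3,x_4) ∈ S_0 × S_1 × S_2 × S_3 × S_4 with 0 ∈ conv{x_0,x_1,x_2,x_3,x_4}, is at least 14. In other words, the minimal colourful simplicial depth satisfies μ(4) ≥ 14. -/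
namespace ColDepth

open Finset

/-- degree of a vertex -/
def deg (E : Finset (Fin 5 → Fin 5)) (i v : Fin 5) : ℕ := (E.filter (fun x => x i = v)).card

lemma sum_deg (E : Finset (Fin 5 → Fin 5)) (i : Fin 5) : ∑ v, deg E i v = E.card := by
  unfold deg
  exact (Finset.card_eq_sum_card_fiberwise (f := fun x : Fin 5 → Fin 5 => x i) (t := Finset.univ)
    (by intro x _; simp)).symm

/-- octahedral property -/
def Oct (E : Finset (Fin 5 → Fin 5)) : Prop :=
  ∀ y z : Fin 5 → Fin 5,
    Even ((Finset.univ.filter (fun ω : Fin 5 → Bool =>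
      (fun i => if ω i then y i else z i) ∈ E)).card)

/-- A cube cannot contain exactly one edge. -/
lemma Oct.two {E : Finset (Fin 5 → Fin 5)} (h : Oct E) (y z : Fin 5 → Fin 5) (hy : y ∈ E)
    (hyz : ∀ i, y i ≠ z i) :
    ∃ x ∈ E, x ≠ y ∧ ∀ i, x i = y i ∨ x i = z i := by
  by_contra hc
  push Not at hc
  have h1 := h y z
  have : (Finset.univ.filter (fun ω : Fin 5 → Bool =>
      (fun i => if ω i then y i else z i) ∈ E)) = {fun _ => true} := by
    ext ω
    simp only [mem_filter, mem_univ, true_and, mem_singleton]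
    constructor
    · intro hω
      by_contra hne
      obtain ⟨i, hi⟩ := hc _ hω (by
        intro heq
        apply hne
        funext i
        have := congrFun heq i
        by_contra hf
        simp at hf
        simp [hf] at this
        exact hyz i this.symm)
      by_cases hb : ω i <;> simp [hb] at hi
    · rintro rfl
      simpa using hy
  rw [this] at h1
  simp at h1

lemma key {E : Finset (Fin 5 → Fin 5)} (h : Oct E) (i a b : Fin 5) (hab : a ≠ b)
    (x : Fin 5 → Fin 5) (hx : x ∈ E) (hxa : x i = a) (hxb : Function.update x i b ∉ E) :
    ∃ k, k ≠ i ∧ ∀ v, ∃ y ∈ E, (y i = a ∨ y i = b) ∧ y k = v := by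
  by_contra hc
  push Not at hc
  choose! T hT using hc
  obtain ⟨w, hw, hne, hw2⟩ := h.two x (fun k => if k = i then b else T k) hx (by
    intro k
    by_cases hk : k = i
    · subst hk; simp [hxa, hab]
    · simp only [hk, if_false]
      exact hT k hk x hx (Or.inl hxa))
  have hwi : w i = a ∨ w i = b := by simpa [hxa] using hw2 i
  have hwk : ∀ k, k ≠ i → w k = x k := by
    intro k hk
    have := hw2 k
    simp only [hk, if_false] at this
    rcases this with h1 | h1
    · exact h1
    · exact absurd h1 (hT k hk w hw hwi)
  rcases hwi with h1 | h1
  · apply hne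
    funext k
    by_cases hk : k = i
    · subst hk; rw [h1, hxa]
    · exact hwk k hk
  · apply hxb
    convert hw using 1
    funext k
    by_cases hk : k = i
    · subst hk; simp [h1]
    · simp [hk, hwk k hk]

lemma card_pair (E : Finset (Fin 5 → Fin 5)) (i a b : Fin 5) (hab : a ≠ b) :
    (E.filter (fun y => y i = a ∨ y i = b)).card = deg E i a + deg E i b := by
  unfold deg
  rw [Finset.filter_or, Finset.card_union_of_disjoint]
  rw [Finset.disjoint_filter]
  intro x _ h1 h2
  exact hab (h1.symm.trans h2)

lemma five_le {E : Finset (Fin 5 → Fin 5)} (i a b : Fin 5) (hab : a ≠ b) (k : Fin 5)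
    (hk : ∀ v, ∃ y ∈ E, (y i = a ∨ y i = b) ∧ y k = v) : 5 ≤ deg E i a + deg E i b := by
  rw [← card_pair E i a b hab]
  have : (Finset.univ : Finset (Fin 5)) ⊆
      (E.filter (fun y => y i = a ∨ y i = b)).image (fun y => y k) := by
    intro v _
    obtain ⟨y, h1, h2, h3⟩ := hk v
    exact mem_image.2 ⟨y, mem_filter.2 ⟨h1, h2⟩, h3⟩
  calc 5 = (Finset.univ : Finset (Fin 5)).card := by simp
    _ ≤ _ := card_le_card this
    _ ≤ _ := card_image_le

lemma closed_of_small {E : Finset (Fin 5 → Fin 5)} (h : Oct E) (i a b : Fin 5)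
    (hd : deg E i a + deg E i b < 5) (x : Fin 5 → Fin 5) (hx : x ∈ E) (hxa : x i = a) :
    Function.update x i b ∈ E := by
  by_contra hxb
  by_cases hab : a = b
  · subst hab; subst hxa; simp at hxb; exact hxb hx
  obtain ⟨k, _, hk⟩ := key h i a b hab x hx hxa hxb
  have := five_le i a b hab k hk
  omega

lemma update_inj {i a b : Fin 5} {x y : Fin 5 → Fin 5} (hx : x i = a) (hy : y i = a)
    (h : Function.update x i b = Function.update y i b) : x = y := by
  funext k
  by_cases hk : k = i
  · subst hk; rw [hx, hy]
  · have := congrFun h k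
    simpa [hk] using this

lemma deg_le_of_closed {E : Finset (Fin 5 → Fin 5)} (i a b : Fin 5)
    (hc : ∀ x ∈ E, x i = a → Function.update x i b ∈ E) : deg E i a ≤ deg E i b := by
  unfold deg
  apply Finset.card_le_card_of_injOn (fun x => Function.update x i b)
  · intro x hx
    simp at hx ⊢
    exact hc x hx.1 hx.2
  · intro x hx y hy hxy
    simp at hx hy
    exact update_inj hx.2 hy.2 hxy

lemma deg_sum_of_ne {E : Finset (Fin 5 → Fin 5)} (h : Oct E) (i a b : Fin 5)
    (hne : deg E i a < deg E i b) : 5 ≤ deg E i a + deg E i b := by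
  by_contra hc
  have := deg_le_of_closed i b a (fun x hx hxa => closed_of_small h i b a (by omega) x hx hxa)
  omega

/-- low degree vertices -/
def G (E : Finset (Fin 5 → Fin 5)) (i : Fin 5) : Finset (Fin 5) :=
  Finset.univ.filter (fun v => deg E i v ≤ 2)

lemma mem_G {E : Finset (Fin 5 → Fin 5)} {i v : Fin 5} : v ∈ G E i ↔ deg E i v ≤ 2 := by
  simp [G]

lemma G_closed {E : Finset (Fin 5 → Fin 5)} (h : Oct E) {i : Fin 5} {x : Fin 5 → Fin 5}
    (hx : x ∈ E) (hxi : x i ∈ G E i) {b : Fin 5} (hb : b ∈ G E i) :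
    Function.update x i b ∈ E := by
  rw [mem_G] at hxi hb
  exact closed_of_small h i (x i) b (by omega) x hx rfl

lemma split_sum (E : Finset (Fin 5 → Fin 5)) (i : Fin 5) :
    ∑ v ∈ G E i, deg E i v + ∑ v ∈ (G E i)ᶜ, deg E i v = E.card := by
  rw [Finset.sum_add_sum_compl, sum_deg]

lemma card_Ei (E : Finset (Fin 5 → Fin 5)) (i : Fin 5) :
    (E.filter (fun x => x i ∈ G E i)).card = ∑ v ∈ G E i, deg E i v := by
  rw [Finset.card_eq_sum_card_fiberwise (f := fun x : Fin 5 → Fin 5 => x i) (t := G E i)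
    (by intro x hx; simp at hx ⊢; exact hx.2)]
  apply Finset.sum_congr rfl
  intro v hv
  unfold deg
  congr 1
  ext x
  simp only [mem_filter]
  constructor
  · rintro ⟨⟨h1, _⟩, h3⟩; exact ⟨h1, h3⟩
  · rintro ⟨h1, h3⟩; exact ⟨⟨h1, h3 ▸ hv⟩, h3⟩

/-- per-colour dichotomy -/
lemma colour {E : Finset (Fin 5 → Fin 5)} (h : Oct E) (hcov : ∀ i v, ∃ x ∈ E, x i = v)
    (hE : E.card ≤ 13) (i : Fin 5) :
    (3 ≤ (G E i).card ∧ 3 ≤ ∑ v ∈ G E i, deg E i v) ∨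
    (2 ≤ (G E i).card ∧ (∀ v ∈ G E i, deg E i v = 2) ∧
      4 ≤ ∑ v ∈ G E i, deg E i v) := by
  have hpos : ∀ v, 1 ≤ deg E i v := by
    intro v
    obtain ⟨x, hx, hxv⟩ := hcov i v
    exact Finset.card_pos.2 ⟨x, mem_filter.2 ⟨hx, hxv⟩⟩
  have hs := split_sum E i
  have hcc : (G E i)ᶜ.card = 5 - (G E i).card := by
    rw [Finset.card_compl]; simp
  have hle : (G E i).card ≤ 5 := by simpa using Finset.card_le_univ (G E i)
  by_cases h1 : ∃ a ∈ G E i, deg E i a = 1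
  · left
    obtain ⟨a, ha, ha1⟩ := h1
    have hb : ∀ v ∈ (G E i)ᶜ, 4 ≤ deg E i v := by
      intro v hv
      rw [Finset.mem_compl, mem_G] at hv
      have := deg_sum_of_ne h i a v (by omega)
      omega
    have hb2 := Finset.card_nsmul_le_sum (G E i)ᶜ (fun v => deg E i v) _ hb
    have ha2 := Finset.card_nsmul_le_sum (G E i) (fun v => deg E i v) 1 (fun v _ => hpos v)
    simp only [smul_eq_mul] at hb2 ha2
    omega
  · right
    push Not at h1
    have h2 : ∀ v ∈ G E i, deg E i v = 2 := by
      intro v hv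
      have e1 := h1 v hv
      have e2 := hpos v
      rw [mem_G] at hv
      omega
    have hb : ∀ v ∈ (G E i)ᶜ, 3 ≤ deg E i v := by
      intro v hv
      rw [Finset.mem_compl, mem_G] at hv
      omega
    have hb2 := Finset.card_nsmul_le_sum (G E i)ᶜ (fun v => deg E i v) _ hb
    have ha2 := Finset.card_nsmul_le_sum (G E i) (fun v => deg E i v) 2 (fun v hv => (h2 v hv).ge)
    have ha3 := Finset.sum_le_card_nsmul (G E i) (fun v => deg E i v) 2 (fun v hv => (h2 v hv).le)
    simp only [smul_eq_mul] at hb2 ha2 ha3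
    refine ⟨by omega, h2, by omega⟩

lemma Gcard_le {E : Finset (Fin 5 → Fin 5)} (h : Oct E) {i j : Fin 5} (hij : i ≠ j)
    {x : Fin 5 → Fin 5} (hx : x ∈ E) (hi : x i ∈ G E i) (hj : x j ∈ G E j) :
    (G E i).card ≤ 2 := by
  refine le_trans ?_ (mem_G.1 hj)
  unfold deg
  apply Finset.card_le_card_of_injOn (fun b => Function.update x i b)
  · intro b hb
    simp
    refine ⟨G_closed h hx hi hb, ?_⟩
    simp [hij.symm]
  · intro b _ b' _ hbb
    simpa using congrFun hbb i

/-- structure in the intersecting case -/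
lemma exact_deg {E : Finset (Fin 5 → Fin 5)} (h : Oct E) (hcov : ∀ i v, ∃ x ∈ E, x i = v)
    (hE : E.card ≤ 13) {i j : Fin 5} (hij : i ≠ j)
    {x : Fin 5 → Fin 5} (hx : x ∈ E) (hi : x i ∈ G E i) (hj : x j ∈ G E j) :
    (G E i).card = 2 ∧ (∀ v ∈ G E i, deg E i v = 2) ∧ ∀ v, v ∉ G E i → deg E i v = 3 := by
  have h2 := Gcard_le h hij hx hi hj
  rcases colour h hcov hE i with ⟨h3, _⟩ | ⟨h3, h4, h5⟩
  · omega
  · refine ⟨by omega, h4, ?_⟩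
    intro v hv
    have hs := split_sum E i
    have hcc : (G E i)ᶜ.card = 5 - (G E i).card := by
      rw [Finset.card_compl]; simp
    have hv' : v ∈ (G E i)ᶜ := by simpa using hv
    rw [← Finset.add_sum_erase _ _ hv'] at hs
    have hb : ∀ u ∈ (G E i)ᶜ.erase v, 3 ≤ deg E i u := by
      intro u hu
      have hv := Finset.mem_of_mem_erase hu
      rw [Finset.mem_compl, mem_G] at hv
      omega
    have hb2 := Finset.card_nsmul_le_sum _ (fun v => deg E i v) _ hb
    rw [Finset.card_erase_of_mem hv', smul_eq_mul] at hb2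
    rw [mem_G] at hv
    omega

/-- all edges through a low vertex agree with `x` off `i, j` -/
lemma low_edges {E : Finset (Fin 5 → Fin 5)} (h : Oct E) (hcov : ∀ i v, ∃ x ∈ E, x i = v)
    (hE : E.card ≤ 13) {i j : Fin 5} (hij : i ≠ j)
    {x : Fin 5 → Fin 5} (hx : x ∈ E) (hi : x i ∈ G E i) (hj : x j ∈ G E j)
    {y : Fin 5 → Fin 5} (hy : y ∈ E) (hyi : y i ∈ G E i) :
    y j ∈ G E j ∧ ∀ l, l ≠ i → l ≠ j → y l = x l := by
  have hdi := (exact_deg h hcov hE hij hx hi hj).2.1 _ hi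
  have hgj := (exact_deg h hcov hE hij.symm hx hj hi).1
  -- edges through `x i`
  have himg : (G E j).image (fun c => Function.update x j c) = E.filter (fun z => z i = x i) := by
    apply Finset.eq_of_subset_of_card_le
    · intro z hz
      obtain ⟨c, hc, rfl⟩ := mem_image.1 hz
      refine mem_filter.2 ⟨G_closed h hx hj hc, by simp [hij]⟩
    · rw [Finset.card_image_of_injective _ (Function.update_injective x j), hgj]
      exact hdi.le
  have hm : Function.update y i (x i) ∈ E.filter (fun z => z i = x i) :=
    mem_filter.2 ⟨G_closed h hy hyi hi, by simp⟩
  rw [← himg] at hm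
  obtain ⟨c, hc, hce⟩ := mem_image.1 hm
  constructor
  · have := congrFun hce j
    simp [hij.symm] at this
    rw [← this]; exact hc
  · intro l hli hlj
    have := congrFun hce l
    simpa [hli, hlj] using this.symm

theorem comb {E : Finset (Fin 5 → Fin 5)} (h : Oct E) (hcov : ∀ i v, ∃ x ∈ E, x i = v) :
    14 ≤ E.card := by
  by_contra hE
  have hE : E.card ≤ 13 := by omega
  by_cases hdisj : ∃ i j, i ≠ j ∧ ∃ x ∈ E, x i ∈ G E i ∧ x j ∈ G E j
  · obtain ⟨i, j, hij, x, hx, hi, hj⟩ := hdisj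
    obtain ⟨gi, di2, di3⟩ := exact_deg h hcov hE hij hx hi hj
    obtain ⟨gj, dj2, dj3⟩ := exact_deg h hcov hE hij.symm hx hj hi
    have main : ∀ y ∈ E, ∀ l, l ≠ i → l ≠ j → y l = x l := by
      intro y hy l hli hlj
      by_cases hyi : y i ∈ G E i
      · exact (low_edges h hcov hE hij hx hi hj hy hyi).2 l hli hlj
      by_cases hyj : y j ∈ G E j
      · exact absurd (low_edges h hcov hE hij.symm hx hj hi hy hyj).1 hyi
      -- another element of `G j`
      obtain ⟨d, hd, hdne⟩ : ∃ d ∈ G E j, d ≠ x j :=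
        Finset.exists_mem_ne (by omega) (x j)
      have hxd : Function.update x j d ∈ E := G_closed h hx hj hd
      have hab : x i ≠ y i := fun he => hyi (he ▸ hi)
      have hnot : Function.update x i (y i) ∉ E := by
        intro hmem
        have := (low_edges h hcov hE hij.symm hx hj hi hmem (by simpa [hij.symm] using hj)).1
        simp at this
        exact hyi this
      obtain ⟨k, hki, hk⟩ := key h i (x i) (y i) hab x hx rfl hnot
      have hcard := card_pair E i (x i) (y i) hab
      rw [di2 _ hi, di3 _ hyi] at hcard
      set P := E.filter (fun z => z i = x i ∨ z i = y i) with hP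
      have himg : P.image (fun z => z k) = Finset.univ := by
        ext v
        simp only [mem_univ, iff_true]
        obtain ⟨z, h1, h2, h3⟩ := hk v
        exact mem_image.2 ⟨z, mem_filter.2 ⟨h1, h2⟩, h3⟩
      have hinj : Set.InjOn (fun z : Fin 5 → Fin 5 => z k) P := by
        apply Finset.injOn_of_card_image_eq
        rw [himg, hcard]; simp
      have hkj : k = j := by
        by_contra hkj
        have := @hinj x (by simp [hP, hx]) (Function.update x j d)
          (by simp [hP, hxd, hij]) (by simp [hkj])
        have := congrFun this j
        simp at this
        exact hdne this.symm
      subst hkj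
      by_contra hl
      -- build the cube
      obtain ⟨T, hT⟩ : ∃ T : Fin 5 → Fin 5, ∀ l, T l ≠ x l ∧ T l ≠ y l := by
        have : ∀ a b : Fin 5, ∃ c, c ≠ a ∧ c ≠ b := by decide
        choose f hf using this
        exact ⟨fun l => f (x l) (y l), fun l => hf _ _⟩
      have hkx : x k ≠ y k := fun he => hyj (he ▸ hj)
      obtain ⟨w, hw, hwne, hwc⟩ := h.two x
        (fun l => if l = i then y i else if l = k then y k else T l) hx (by
          intro l
          by_cases h1 : l = i
          · subst h1; simpa using hab
          by_cases h2 : l = k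
          · subst h2; simpa [h1] using hkx
          simp [h1, h2]
          exact (hT l).1.symm)
      have hwi : w i = x i ∨ w i = y i := by simpa using hwc i
      have hwk : w k = x k ∨ w k = y k := by simpa [hki] using hwc k
      have hwP : w ∈ P := mem_filter.2 ⟨hw, hwi⟩
      rcases hwk with h1 | h1
      · exact hwne (hinj hwP (by simp [hP, hx]) h1)
      · have : w = y := hinj hwP (by simp [hP, hy]) h1
        subst this
        have := hwc l
        simp [hli, hlj] at this
        rcases this with h3 | h3
        · exact hl h3
        · exact (hT l).2 h3.symm
    obtain ⟨l, hli, hlj⟩ : ∃ l : Fin 5, l ≠ i ∧ l ≠ j := by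
      have : ∀ i j : Fin 5, ∃ l : Fin 5, l ≠ i ∧ l ≠ j := by decide
      exact this i j
    obtain ⟨v, hv⟩ := exists_ne (x l)
    obtain ⟨y, hy, hyv⟩ := hcov l v
    exact hv (hyv.symm.trans (main y hy l hli hlj))
  · push Not at hdisj
    have hsub : (Finset.univ.biUnion (fun i => E.filter (fun x => x i ∈ G E i))) ⊆ E := by
      intro x hx
      simp at hx
      exact hx.1
    have := Finset.card_le_card hsub
    rw [Finset.card_biUnion] at this
    · have h3 : ∀ i ∈ (Finset.univ : Finset (Fin 5)),
          3 ≤ (E.filter (fun x => x i ∈ G E i)).card := by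
        intro i _
        rw [card_Ei]
        rcases colour h hcov hE i with h1 | h1 <;> omega
      have := Finset.card_nsmul_le_sum _ _ _ h3
      simp at this
      omega
    · intro i _ j _ hij
      refine Finset.disjoint_filter.2 ?_
      intro x hx h1 h2
      exact hdisj i j hij x hx h1 h2

end ColDepth
namespace ColDepth
open Finset

lemma carath {W : Type*} [NormedAddCommGroup W] [InnerProductSpace ℝ W] [FiniteDimensional ℝ W]
    (hW : Module.finrank ℝ W = 4) (φ : Fin 5 → Fin 5 → W)
    (hpos : ∀ i (r : W), r ≠ 0 → ∃ v, 0 < inner ℝ r (φ i v)) (i0 : Fin 5) (q : W) :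
    ∃ (I : Finset (Fin 5)) (x : Fin 5 → Fin 5) (c : Fin 5 → ℝ), i0 ∉ I ∧ (∀ k, 0 ≤ c k) ∧
      q = ∑ k ∈ I, c k • φ k (x k) := by
  classical
  let A : Set (Finset (Fin 5) × (Fin 5 → Fin 5)) :=
    {p | i0 ∉ p.1 ∧ LinearIndepOn ℝ (fun k => φ k (p.2 k)) (p.1 : Set (Fin 5))}
  let C : Finset (Fin 5) × (Fin 5 → Fin 5) → Set W := fun p =>
    {z | ∃ c : Fin 5 → ℝ, (∀ k, 0 ≤ c k) ∧ z = ∑ k ∈ p.1, c k • φ k (p.2 k)}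
  have hcl : ∀ p ∈ A, IsClosed (C p) := by
    rintro ⟨I, x⟩ ⟨_, hli⟩
    let L : (I → ℝ) →ₗ[ℝ] W := Fintype.linearCombination ℝ (fun k : I => φ k (x k))
    have hL : Function.Injective L :=
      hli.fintypeLinearCombination_injective
    have hemb := LinearMap.isClosedEmbedding_of_injective (f := L) (LinearMap.ker_eq_bot.2 hL)
    have : C (I, x) = L '' {c | ∀ k, 0 ≤ c k} := by
      ext z
      constructor
      · rintro ⟨c, hc, rfl⟩
        refine ⟨fun k => c k, fun k => hc k, ?_⟩
        simp only [L, Fintype.linearCombination_apply]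
        exact Finset.sum_coe_sort I (fun k => c k • φ k (x k))
      · rintro ⟨c, hc, rfl⟩
        refine ⟨fun k => if h : k ∈ I then c ⟨k, h⟩ else 0, ?_, ?_⟩
        · intro k
          dsimp only
          split_ifs
          · exact hc _
          · exact le_rfl
        · simp only [L, Fintype.linearCombination_apply]
          rw [← Finset.sum_coe_sort I]
          apply Finset.sum_congr rfl
          intro k _
          simp
    rw [this]
    apply hemb.isClosedMap
    have : {c : I → ℝ | ∀ k, 0 ≤ c k} = ⋂ k, {c : I → ℝ | 0 ≤ c k} := by ext; simp
    rw [this]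
    exact isClosed_iInter fun k => isClosed_le continuous_const (continuous_apply k)
  let U : Set W := ⋃ p ∈ A, C p
  have hU : IsClosed U := (Set.toFinite A).isClosed_biUnion hcl
  have hne : U.Nonempty := by
    refine ⟨0, Set.mem_biUnion (x := (∅, fun _ => 0)) ⟨by simp, ?_⟩ ⟨fun _ => 0, by simp, by simp⟩⟩
    simp
  obtain ⟨z, hz, hzd⟩ := hU.exists_infDist_eq_dist hne q
  have hmin : ∀ u ∈ U, ‖q - z‖ ≤ ‖q - u‖ := by
    intro u hu
    rw [← dist_eq_norm, ← dist_eq_norm, ← hzd]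
    exact Metric.infDist_le_dist_of_mem hu
  -- perturbation principle
  have hpert : ∀ y : W, (∃ δ > 0, ∀ ε : ℝ, 0 < ε → ε ≤ δ → z + ε • y ∈ U) →
      inner ℝ (q - z) y ≤ 0 := by
    rintro y ⟨δ, hδ, hy⟩
    by_contra hc
    push Not at hc
    set a := inner ℝ (q - z) y with ha
    have hden : 0 < ‖y‖ ^ 2 + 1 := by positivity
    set ε := min δ (a / (‖y‖ ^ 2 + 1)) with hε
    have hε0 : 0 < ε := lt_min hδ (by positivity)
    have hε1 : ε * (‖y‖ ^ 2 + 1) ≤ a := by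
      rw [← le_div_iff₀ hden]; exact min_le_right _ _
    have h1 := hmin _ (hy ε hε0 (min_le_left _ _))
    have h2 : ‖q - z‖ ^ 2 ≤ ‖q - (z + ε • y)‖ ^ 2 := by gcongr
    have h3 : q - (z + ε • y) = (q - z) - ε • y := by abel
    rw [h3, norm_sub_sq_real (q - z) (ε • y), inner_smul_right, norm_smul, mul_pow, ← ha] at h2
    simp only [Real.norm_eq_abs, sq_abs] at h2
    nlinarith [mul_pos hε0 hc, mul_le_mul_of_nonneg_left hε1 hε0.le, mul_pos hε0 hε0]
  obtain ⟨⟨I, x⟩, ⟨hI0, hli⟩, c, hc, hzc⟩ := Set.mem_iUnion₂.1 hz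
  dsimp only at hI0 hli hzc
  by_cases hr : q - z = 0
  · refine ⟨I, x, c, hI0, hc, ?_⟩
    rw [← hzc]; exact sub_eq_zero.1 hr
  exfalso
  set J := I.filter (fun k => 0 < c k) with hJ
  have hJI : J ⊆ I := filter_subset _ _
  have hzJ : z = ∑ k ∈ J, c k • φ k (x k) := by
    rw [hzc, hJ, Finset.sum_filter]
    apply Finset.sum_congr rfl
    intro k _
    split_ifs with h
    · rfl
    · rw [le_antisymm (not_lt.1 h) (hc k), zero_smul]
  have hliJ : LinearIndepOn ℝ (fun k => φ k (x k)) (J : Set (Fin 5)) :=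
    hli.mono (by exact_mod_cast hJI)
  have horth : ∀ k ∈ J, inner ℝ (q - z) (φ k (x k)) = 0 := by
    intro k hk
    have hck : 0 < c k := (mem_filter.1 hk).2
    have gen : ∀ s : ℝ, (s = 1 ∨ s = -1) → inner ℝ (q - z) (s • φ k (x k)) ≤ 0 := by
      intro s hs
      apply hpert
      refine ⟨c k, hck, ?_⟩
      intro ε hε hεc
      refine Set.mem_biUnion (x := (I, x)) ⟨hI0, hli⟩
        ⟨Function.update c k (c k + ε * s), ?_, ?_⟩
      · intro l
        by_cases hl : l = k
        · subst hl
          rcases hs with rfl | rfl <;> simp <;> linarith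
        · simpa [hl] using hc l
      · dsimp only
        rw [hzc, ← Finset.add_sum_erase I _ (hJI hk),
          ← Finset.add_sum_erase I (fun l => (Function.update c k (c k + ε * s)) l • φ l (x l))
            (hJI hk)]
        have : ∑ l ∈ I.erase k, (Function.update c k (c k + ε * s)) l • φ l (x l) =
            ∑ l ∈ I.erase k, c l • φ l (x l) := by
          apply Finset.sum_congr rfl
          intro l hl
          simp [Finset.ne_of_mem_erase hl]
        rw [this]
        simp only [Function.update_self, add_smul, mul_smul]
        abel
    have h1 := gen 1 (Or.inl rfl)
    have h2 := gen (-1) (Or.inr rfl)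
    simp at h1 h2
    linarith
  have hspan : ∀ u ∈ Submodule.span ℝ ((fun k => φ k (x k)) '' (J : Set (Fin 5))),
      inner ℝ (q - z) u = 0 := by
    intro u hu
    induction hu using Submodule.span_induction with
    | mem u hu => obtain ⟨k, hk, rfl⟩ := hu; exact horth k hk
    | zero => simp
    | add u v _ _ h1 h2 => rw [inner_add_right, h1, h2, add_zero]
    | smul t u _ h1 => rw [inner_smul_right, h1, mul_zero]
  have hcardJ : J.card ≤ 3 := by
    have hne : Submodule.span ℝ ((fun k => φ k (x k)) '' (J : Set (Fin 5))) ≠ ⊤ := by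
      intro htop
      have := hspan (q - z) (htop ▸ Submodule.mem_top)
      exact hr (inner_self_eq_zero.1 this)
    have hlt := Submodule.finrank_lt (lt_top_iff_ne_top.2 hne).ne
    have : Module.finrank ℝ (Submodule.span ℝ ((fun k => φ k (x k)) '' (J : Set (Fin 5)))) = J.card := by
      have := finrank_span_eq_card hliJ.linearIndependent
      rw [Set.image_eq_range]
      simpa using this
    omega
  obtain ⟨j, hj⟩ : ∃ j, j ∉ insert i0 J := by
    by_contra hall
    push Not at hall
    have : insert i0 J = Finset.univ := by ext; simp [hall]
    have h1 := Finset.card_insert_le i0 J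
    rw [this] at h1
    simp at h1
    omega
  rw [Finset.mem_insert, not_or] at hj
  obtain ⟨v, hv⟩ := hpos j (q - z) hr
  set x' := Function.update x j v with hx'
  have hxx : ∀ k ∈ J, φ k (x' k) = φ k (x k) := by
    intro k hk
    have : k ≠ j := fun h => hj.2 (h ▸ hk)
    simp [hx', this]
  have hle := hpert (φ j v) ⟨1, one_pos, ?_⟩
  · linarith
  intro ε hε _
  refine Set.mem_biUnion (x := (insert j J, x')) ⟨?_, ?_⟩ ⟨Function.update c j ε, ?_, ?_⟩
  · simp only [Finset.mem_insert, not_or]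
    exact ⟨fun h => hj.1 h.symm, fun h => hI0 (hJI h)⟩
  · dsimp only
    rw [Finset.coe_insert]
    have himg : (fun k => φ k (x' k)) '' (J : Set (Fin 5)) =
        (fun k => φ k (x k)) '' (J : Set (Fin 5)) :=
      Set.image_congr fun k hk => hxx k hk
    apply LinearIndepOn.insert
    · exact hliJ.congr (fun k hk => (hxx k hk).symm)
    · rw [himg]
      intro hmem
      have := hspan _ hmem
      simp [hx'] at this
      linarith
  · intro k
    by_cases hk : k = j
    · subst hk; simpa using hε.le
    · simpa [hk] using hc k
  · dsimp only
    rw [Finset.sum_insert hj.2, hzJ, add_comm]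
    congr 1
    · simp [hx']
    · apply Finset.sum_congr rfl
      intro k hk
      have : k ≠ j := fun h => hj.2 (h ▸ hk)
      rw [hxx k hk]
      simp [this]

end ColDepth
namespace ColDepth
open Finset

/-- parity of the number of endpoints of an interval -/
lemma signs (a t : Fin 5 → ℝ) (ha : ∀ i, a i ≠ 0) (ht : Function.Injective t)
    (Q : Fin 5 → Prop) [DecidablePred Q] (hQ : ∀ i, Q i ↔ ∀ k, 0 ≤ a k * (t i - t k)) :
    Odd ((Finset.univ.filter Q).card) ↔ ((∀ k, 0 < a k) ∨ (∀ k, a k < 0)) := by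
  classical
  have hQ1 : ∀ i, Q i ↔ ∀ k, (0 < a k → t k ≤ t i) ∧ (a k < 0 → t i ≤ t k) := by
    intro i
    rw [hQ]
    refine forall_congr' fun k => ?_
    rcases lt_or_gt_of_ne (ha k) with h | h
    · constructor
      · intro h1
        exact ⟨fun h2 => absurd h2 h.not_gt, fun _ => by nlinarith⟩
      · rintro ⟨_, h1⟩
        nlinarith [h1 h]
    · constructor
      · intro h1
        exact ⟨fun _ => by nlinarith, fun h2 => absurd h2 h.not_gt⟩
      · rintro ⟨h1, _⟩
        nlinarith [h1 h]
  by_cases hp : ∀ k, 0 < a k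
  · obtain ⟨m, hm⟩ := Finite.exists_max t
    have : Finset.univ.filter Q = {m} := by
      ext i
      simp only [mem_filter, mem_univ, true_and, mem_singleton, hQ1]
      constructor
      · intro h
        exact ht (le_antisymm (hm i) ((h m).1 (hp m)))
      · rintro rfl k
        exact ⟨fun _ => hm k, fun h => absurd h (hp k).not_gt⟩
    simp [this, hp]
  by_cases hn : ∀ k, a k < 0
  · obtain ⟨m, hm⟩ := Finite.exists_min t
    have : Finset.univ.filter Q = {m} := by
      ext i
      simp only [mem_filter, mem_univ, true_and, mem_singleton, hQ1]
      constructor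
      · intro h
        exact ht (le_antisymm ((h m).2 (hn m)) (hm i))
      · rintro rfl k
        exact ⟨fun h => absurd h (hn k).not_gt, fun _ => hm k⟩
    simp [this, hn]
  simp only [hp, hn, or_self, iff_false]
  push Not at hp hn
  obtain ⟨n0, hn0⟩ := hp
  obtain ⟨p0, hp0⟩ := hn
  have hn0 : a n0 < 0 := lt_of_le_of_ne hn0 (ha n0)
  have hp0 : 0 < a p0 := lt_of_le_of_ne hp0 (ha p0).symm
  obtain ⟨p, hpm, hpmax⟩ := Finset.exists_max_image (Finset.univ.filter (fun k => 0 < a k)) t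
    ⟨p0, by simp [hp0]⟩
  obtain ⟨n, hnm, hnmin⟩ := Finset.exists_min_image (Finset.univ.filter (fun k => a k < 0)) t
    ⟨n0, by simp [hn0]⟩
  simp only [mem_filter, mem_univ, true_and] at hpm hpmax hnm hnmin
  have hpn : p ≠ n := by rintro rfl; linarith
  rw [Nat.not_odd_iff_even]
  have hall : ∀ i, Q i ↔ (t p ≤ t n ∧ (i = p ∨ i = n)) := by
    intro i
    rw [hQ1]
    constructor
    · intro h
      refine ⟨((h p).1 hpm).trans ((h n).2 hnm), ?_⟩
      rcases lt_or_gt_of_ne (ha i) with h1 | h1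
      · right
        exact ht (le_antisymm ((h n).2 hnm) (hnmin i h1))
      · left
        exact ht (le_antisymm (hpmax i h1) ((h p).1 hpm))
    · rintro ⟨h1, rfl | rfl⟩ k
      · exact ⟨fun h => hpmax k h, fun h => h1.trans (hnmin k h)⟩
      · exact ⟨fun h => (hpmax k h).trans h1, fun h => hnmin k h⟩
  by_cases hle : t p ≤ t n
  · have : Finset.univ.filter Q = {p, n} := by
      ext i; simp [hall, hle]
    rw [this, Finset.card_pair hpn]
    exact even_two
  · have : Finset.univ.filter Q = ∅ := by
      ext i; simp [hall, hle]
    simp [this]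

section
variable {V : Type*} [AddCommGroup V] [Module ℝ V]

/-- `w` lies in the cone of the `x k`, `k ≠ i` -/
def InCone (w : V) (x : Fin 5 → V) (i : Fin 5) : Prop :=
  ∃ c : Fin 5 → ℝ, (∀ k, 0 ≤ c k) ∧ c i = 0 ∧ ∑ k, c k • x k = w

lemma inCone_congr (w : V) (x y : Fin 5 → V) (i : Fin 5) (h : ∀ k, k ≠ i → x k = y k) :
    InCone w x i ↔ InCone w y i := by
  unfold InCone
  refine exists_congr fun c => and_congr_right fun _ => and_congr_right fun hi => ?_
  have : ∑ k, c k • x k = ∑ k, c k • y k := by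
    apply Finset.sum_congr rfl
    intro k _
    by_cases hk : k = i
    · subst hk; simp [hi]
    · rw [h k hk]
  rw [this]

lemma zero_mem_hull (x : Fin 5 → V) :
    (0 : V) ∈ convexHull ℝ (Set.range x) ↔
      ∃ b : Fin 5 → ℝ, (∀ k, 0 ≤ b k) ∧ b ≠ 0 ∧ ∑ k, b k • x k = 0 := by
  constructor
  · intro h
    rw [convexHull_range_eq_exists_affineCombination] at h
    obtain ⟨s, b, hb, hb1, h0⟩ := h
    classical
    refine ⟨fun k => if k ∈ s then b k else 0, ?_, ?_, ?_⟩
    · intro k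
      dsimp only
      split_ifs with hk
      · exact hb k hk
      · exact le_rfl
    · intro h
      have : ∑ k ∈ s, b k = 0 := by
        apply Finset.sum_eq_zero
        intro k hk
        have := congrFun h k
        simpa [hk] using this
      rw [this] at hb1
      exact zero_ne_one hb1
    · rw [Finset.affineCombination_eq_linear_combination _ _ _ hb1] at h0
      simpa [ite_smul, Finset.sum_ite_mem] using h0
  · rintro ⟨b, hb, hne, h0⟩
    have hpos : 0 < ∑ k, b k := by
      apply Finset.sum_pos'
      · intro k _; exact hb k
      · obtain ⟨k, hk⟩ := Function.ne_iff.1 hne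
        exact ⟨k, mem_univ _, lt_of_le_of_ne (hb k) (Ne.symm hk)⟩
    have := (convex_convexHull ℝ (Set.range x)).sum_mem (t := Finset.univ)
      (w := fun k => (∑ k, b k)⁻¹ * b k) (z := x)
      (fun k _ => mul_nonneg (inv_nonneg.2 hpos.le) (hb k))
      (by rw [← Finset.mul_sum]; exact inv_mul_cancel₀ hpos.ne')
      (fun k _ => subset_convexHull ℝ _ ⟨k, rfl⟩)
    simpa [mul_smul, ← Finset.smul_sum, h0] using this

open Classical in
lemma parityK (w : V) (x : Fin 5 → V)
    (hrank : Module.finrank ℝ V = 4)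
    (hw : ∀ c : Fin 5 → ℝ, ∑ k, c k • x k = w → ∀ i j, i ≠ j → c i = 0 → c j ≠ 0)
    (hinj : Function.Injective x → ∀ a : Fin 5 → ℝ, ∑ k, a k • x k = 0 →
      ∀ i, a i = 0 → a = 0)
    (hnon : ¬ Function.Injective x → (0 : V) ∉ convexHull ℝ (Set.range x)) :
    (0 : V) ∈ convexHull ℝ (Set.range x) ↔
      Odd ((Finset.univ.filter (fun i => InCone w x i)).card) := by
  by_cases hx : Function.Injective x
  · have hinj := hinj hx
    have hli : LinearIndependent ℝ (fun k : Fin 4 => x k.succ) := by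
      rw [Fintype.linearIndependent_iff]
      intro g hg i
      have := hinj (Fin.cons 0 g) (by rw [Fin.sum_univ_succ]; simpa using hg) 0 (by simp)
      have := congrFun this i.succ
      simpa using this
    have hspan := hli.span_eq_top_of_card_eq_finrank (by simp [hrank])
    have hrep : ∀ u : V, ∃ d : Fin 4 → ℝ, ∑ k, d k • x k.succ = u := by
      intro u
      have : u ∈ Submodule.span ℝ (Set.range (fun k : Fin 4 => x k.succ)) := by
        rw [hspan]; trivial
      exact (Submodule.mem_span_range_iff_exists_fun ℝ).1 this
    obtain ⟨d, hd⟩ := hrep w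
    obtain ⟨d', hd'⟩ := hrep (x 0)
    obtain ⟨c0, hc0⟩ : ∃ c0 : Fin 5 → ℝ, ∑ k, c0 k • x k = w :=
      ⟨Fin.cons 0 d, by rw [Fin.sum_univ_succ]; simpa using hd⟩
    obtain ⟨a, hane, ha0⟩ : ∃ a : Fin 5 → ℝ, a ≠ 0 ∧ ∑ k, a k • x k = 0 := by
      refine ⟨Fin.cons (-1) d', ?_, ?_⟩
      · intro h
        have := congrFun h 0
        simp at this
      · rw [Fin.sum_univ_succ]; simp [hd']
    have ha : ∀ i, a i ≠ 0 := fun i hi => hane (hinj a ha0 i hi)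
    set t : Fin 5 → ℝ := fun i => - c0 i / a i with ht
    have hline : ∀ s : ℝ, ∑ k, (c0 k + s * a k) • x k = w := by
      intro s
      simp only [add_smul, Finset.sum_add_distrib, mul_smul, ← Finset.smul_sum, ha0, hc0]
      simp
    have htk : ∀ k, c0 k = - (t k * a k) := by
      intro k
      simp only [ht]
      field_simp [ha k]
    have htinj : Function.Injective t := by
      intro i j hij
      by_contra hne
      apply hw _ (hline (t i)) i j hne
      · rw [htk i]; ring
      · rw [htk j, hij]; ring
    have huniq : ∀ b : Fin 5 → ℝ, ∑ k, b k • x k = 0 → ∀ k, b k = (b 0 / a 0) * a k := by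
      intro b hb k
      have := hinj (fun k => b k - (b 0 / a 0) * a k) (by
        simp only [sub_smul, Finset.sum_sub_distrib, mul_smul, ← Finset.smul_sum, ha0, hb]
        simp) 0 (by have := ha 0; field_simp; simp)
      have := congrFun this k
      simpa [sub_eq_zero] using this
    rw [signs a t ha htinj (fun i => InCone w x i)]
    · rw [zero_mem_hull]
      constructor
      · rintro ⟨b, hb, hbne, hb0⟩
        have hu := huniq b hb0
        have hs : b 0 / a 0 ≠ 0 := by
          intro h
          apply hbne
          funext k
          rw [hu k, h]; simp
        rcases lt_or_gt_of_ne hs with h | h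
        · right
          intro k
          have := hb k
          rw [hu k] at this
          exact lt_of_le_of_ne (by nlinarith) (ha k)
        · left
          intro k
          have := hb k
          rw [hu k] at this
          exact lt_of_le_of_ne (by nlinarith) (ha k).symm
      · rintro (h | h)
        · exact ⟨a, fun k => (h k).le, hane, ha0⟩
        · exact ⟨-a, fun k => by simpa using (h k).le, by simpa using hane, by simp [ha0]⟩
    · intro i
      constructor
      · rintro ⟨c, hc, hci, hcw⟩ k
        have hu := huniq (fun k => c k - c0 k) (by
          simp only [sub_smul, Finset.sum_sub_distrib, hcw, hc0, sub_self])
        set s := (c 0 - c0 0) / a 0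
        have hs : s = t i := by
          have h1 := hu i
          simp only [hci] at h1
          have h2 := htk i
          have h3 : (s - t i) * a i = 0 := by linarith
          rcases mul_eq_zero.1 h3 with h4 | h4
          · linarith
          · exact absurd h4 (ha i)
        have h1 := hu k
        have h2 := hc k
        have h3 := htk k
        rw [hs] at h1
        nlinarith
      · intro h
        refine ⟨fun k => c0 k + t i * a k, ?_, ?_, hline _⟩
        · intro k
          have := h k
          dsimp only
          rw [htk k]
          nlinarith
        · dsimp only
          rw [htk i]; ring
  · have hnot := hnon hx
    simp only [hnot, false_iff, Nat.not_odd_iff_even]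
    simp only [Function.Injective] at hx
    push Not at hx
    obtain ⟨i, j, hij, hne⟩ := hx
    -- moving the coefficient
    have hmove : ∀ (i j : Fin 5), x i = x j → i ≠ j → ∀ c : Fin 5 → ℝ,
        ∑ k, (Function.update (Function.update c i (c i + c j)) j 0) k • x k
          = ∑ k, c k • x k := by
      intro i j hij hne c
      have hji : j ∈ Finset.univ.erase i := by simp [hne.symm]
      rw [← Finset.add_sum_erase _ _ (mem_univ i), ← Finset.add_sum_erase _ _ hji,
        ← Finset.add_sum_erase _ (fun k => c k • x k) (mem_univ i),
        ← Finset.add_sum_erase _ (fun k => c k • x k) hji]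
      have : ∑ k ∈ (Finset.univ.erase i).erase j,
          (Function.update (Function.update c i (c i + c j)) j 0) k • x k =
          ∑ k ∈ (Finset.univ.erase i).erase j, c k • x k := by
        apply Finset.sum_congr rfl
        intro k hk
        simp only [mem_erase] at hk
        simp [hk.1, hk.2.1]
      rw [this]
      simp [hne, add_smul, hij, add_assoc]
    have hsw : ∀ (i j : Fin 5), x i = x j → i ≠ j → InCone w x i → InCone w x j := by
      rintro i j hij hne ⟨c, hc, hci, hcw⟩
      refine ⟨_, ?_, ?_, (hmove i j hij hne c).trans hcw⟩
      · intro k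
        by_cases h1 : k = j
        · subst h1; simp
        · by_cases h2 : k = i
          · subst h2; simp [hne]; linarith [hc k, hc j]
          · simp [h1, h2, hc k]
      · simp
    have hout : ∀ k, k ≠ i → k ≠ j → ¬ InCone w x k := by
      rintro k hki hkj ⟨c, hc, hck, hcw⟩
      refine hw _ ((hmove i j hij hne c).trans hcw) j k hkj.symm ?_ ?_
      · simp
      · simp [hki, hkj, hck]
    by_cases hi : InCone w x i
    · have hj := hsw i j hij hne hi
      have : Finset.univ.filter (fun i => InCone w x i) = {i, j} := by
        ext k
        simp only [mem_filter, mem_univ, true_and, mem_insert, mem_singleton]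
        constructor
        · intro h
          by_contra hc
          push Not at hc
          exact hout k hc.1 hc.2 h
        · rintro (rfl | rfl)
          · exact hi
          · exact hj
      rw [this, Finset.card_pair hne]
      exact even_two
    · have hj : ¬ InCone w x j := fun h => hi (hsw j i hij.symm hne.symm h)
      have : Finset.univ.filter (fun i => InCone w x i) = ∅ := by
        ext k
        simp only [mem_filter, mem_univ, true_and, notMem_empty, iff_false]
        by_cases h1 : k = i
        · subst h1; exact hi
        by_cases h2 : k = j
        · subst h2; exact hj
        exact hout k h1 h2
      simp [this]

open Classical in
/-- cube parity -/
lemma parityCube (w : V) (y z : Fin 5 → V) (F : (Fin 5 → V) → Prop)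
    (hF : ∀ ω : Fin 5 → Bool, F (fun i => if ω i then y i else z i) ↔
      Odd ((Finset.univ.filter
        (fun i => InCone w (fun i => if ω i then y i else z i) i)).card)) :
    Even ((Finset.univ.filter (fun ω : Fin 5 → Bool =>
      F (fun i => if ω i then y i else z i))).card) := by
  rw [← ZMod.natCast_eq_zero_iff_even, Finset.card_filter]
  push_cast
  have : ∀ ω : Fin 5 → Bool, (if F (fun i => if ω i then y i else z i) then (1 : ZMod 2) else 0) =
      ∑ i, if InCone w (fun i => if ω i then y i else z i) i then (1 : ZMod 2) else 0 := by
    intro ω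
    have h2 : (∑ i, if InCone w (fun i => if ω i then y i else z i) i then (1 : ZMod 2) else 0) =
        (((Finset.univ.filter
        (fun i => InCone w (fun i => if ω i then y i else z i) i)).card : ℕ) : ZMod 2) := by
      rw [Finset.card_filter]; push_cast; rfl
    rw [h2]
    split_ifs with h
    · exact ((ZMod.natCast_eq_one_iff_odd).2 ((hF ω).1 h)).symm
    · rw [hF ω, Nat.not_odd_iff_even] at h
      exact ((ZMod.natCast_eq_zero_iff_even).2 h).symm
  simp only [this]
  rw [Finset.sum_comm]
  apply Finset.sum_eq_zero
  intro i _
  apply Finset.sum_involution (fun ω _ => Function.update ω i (!ω i))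
  · intro ω _
    have : InCone w (fun k => if (Function.update ω i (!ω i)) k then y k else z k) i ↔
        InCone w (fun k => if ω k then y k else z k) i := by
      apply inCone_congr
      intro k hk
      simp [hk]
    simp only [this]
    split_ifs
    · decide
    · decide
  · intro ω _ _ h
    have := congrFun h i
    simp at this
  · intro ω _; simp
  · intro ω _; simp

end
end ColDepth

namespace ColDepth
lemma small_pos (A : Set (Fin 4 → ℝ)) (h : (0 : Fin 4 → ℝ) ∈ interior A) (u : Fin 4 → ℝ) :
    ∃ ε : ℝ, 0 < ε ∧ ε • u ∈ A := by
  have hc : Filter.Tendsto (fun ε : ℝ => ε • u) (nhds 0) (nhds 0) := by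
    have : Continuous (fun ε : ℝ => ε • u) := by fun_prop
    simpa using this.tendsto 0
  have hm := hc (mem_interior_iff_mem_nhds.1 h)
  obtain ⟨δ, hδ, hsub⟩ := Metric.mem_nhds_iff.1 hm
  refine ⟨δ / 2, by positivity, hsub ?_⟩
  simp [abs_of_pos hδ, hδ]
end ColDepth

namespace ColDepth
open Finset

/-- positivity of functionals -/
lemma func_pos (s : Finset (Fin 4 → ℝ))
    (hint : (0 : Fin 4 → ℝ) ∈ interior (convexHull ℝ (s : Set (Fin 4 → ℝ))))
    (f : (Fin 4 → ℝ) →ₗ[ℝ] ℝ) (u : Fin 4 → ℝ) (hu : 0 < f u) : ∃ v ∈ s, 0 < f v := by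
  by_contra hc
  push Not at hc
  have hsub : convexHull ℝ (s : Set (Fin 4 → ℝ)) ⊆ {v | f v ≤ 0} :=
    convexHull_min (fun v hv => hc v hv) (convex_halfSpace_le f.isLinear 0)
  obtain ⟨ε, hε, hm⟩ := small_pos _ hint u
  have := hsub hm
  simp at this
  nlinarith [mul_pos hε hu]

/-- linear independence from general position -/
lemma linindep_of_aff (s : Finset (Fin 4 → ℝ)) (h0 : (0 : Fin 4 → ℝ) ∉ s)
    (h : AffineIndependent ℝ (fun p : (insert 0 s : Finset (Fin 4 → ℝ)) => (p : Fin 4 → ℝ)))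
    (g : (Fin 4 → ℝ) → ℝ) (hg : ∑ v ∈ s, g v • v = 0) : ∀ v ∈ s, g v = 0 := by
  intro v hv
  rw [affineIndependent_iff] at h
  let g' : (Fin 4 → ℝ) → ℝ := fun u => if u = 0 then - ∑ v ∈ s, g v else g u
  have hs : ∑ u ∈ s, g' u = ∑ u ∈ s, g u := by
    apply Finset.sum_congr rfl
    intro u hu
    have : u ≠ 0 := fun h => h0 (h ▸ hu)
    simp [g', this]
  have hs2 : ∑ u ∈ s, g' u • u = ∑ u ∈ s, g u • u := by
    apply Finset.sum_congr rfl
    intro u hu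
    have : u ≠ 0 := fun h => h0 (h ▸ hu)
    simp [g', this]
  have := h Finset.univ (fun u => g' u) (by
      rw [Finset.sum_coe_sort (insert 0 s) g', Finset.sum_insert h0, hs]
      simp [g']) (by
      rw [Finset.sum_coe_sort (insert 0 s) (fun u => g' u • u), Finset.sum_insert h0, hs2, hg]
      simp) ⟨v, Finset.mem_insert_of_mem hv⟩ (Finset.mem_univ _)
  have hv0 : v ≠ 0 := fun h => h0 (h ▸ hv)
  simpa [g', hv0] using this

lemma zero_notMem (s : Finset (Fin 4 → ℝ))
    (h : AffineIndependent ℝ (fun p : s => (p : Fin 4 → ℝ))) (hc : s.card = 5)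
    (hint : (0 : Fin 4 → ℝ) ∈ interior (convexHull ℝ (s : Set (Fin 4 → ℝ)))) :
    (0 : Fin 4 → ℝ) ∉ s := by
  intro h0
  have hins : insert 0 (s.erase 0) = s := Finset.insert_erase h0
  have hli := linindep_of_aff (s.erase 0) (Finset.notMem_erase _ _) (by rw [hins]; exact h)
  obtain ⟨ε, hε, hm⟩ := small_pos _ hint (∑ v ∈ s.erase 0, (-1 : ℝ) • v)
  rw [Finset.mem_convexHull'] at hm
  obtain ⟨b, hb, _, hb2⟩ := hm
  rw [← Finset.add_sum_erase _ _ h0] at hb2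
  simp only [smul_zero, zero_add] at hb2
  have hz := hli (fun v => b v + ε) (by
    simp only [add_smul, Finset.sum_add_distrib, hb2, Finset.smul_sum]
    rw [← Finset.sum_add_distrib]
    apply Finset.sum_eq_zero
    intro v _
    simp)
  have hne : (s.erase 0).Nonempty := by
    rw [← Finset.card_pos, Finset.card_erase_of_mem h0, hc]; norm_num
  obtain ⟨v, hv⟩ := hne
  have h1 := hz v hv
  have h2 := hb v (Finset.mem_of_mem_erase hv)
  linarith

/-- generic vector -/
lemma exists_generic (P : Finset (Fin 4 → ℝ)) :
    ∃ w : Fin 4 → ℝ, ∀ s : Finset (Fin 4 → ℝ), s ⊆ P → s.card ≤ 3 →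
      w ∉ Submodule.span ℝ (s : Set (Fin 4 → ℝ)) := by
  classical
  let T : Finset (Submodule ℝ (Fin 4 → ℝ)) :=
    (P.powerset.filter (fun s : Finset (Fin 4 → ℝ) => s.card ≤ 3)).image
      (fun s : Finset (Fin 4 → ℝ) => Submodule.span ℝ (s : Set (Fin 4 → ℝ)))
  have hT : ⊤ ∉ T := by
    intro h
    obtain ⟨s, hs, he⟩ := Finset.mem_image.1 h
    have h3 := (Finset.mem_filter.1 hs).2
    have h1 := finrank_span_finset_le_card (R := ℝ) s
    rw [Set.finrank, he] at h1
    simp at h1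
    omega
  have := Subspace.biUnion_ne_univ_of_top_notMem hT
  obtain ⟨w, hw⟩ := (Set.ne_univ_iff_exists_notMem _).1 this
  refine ⟨w, fun s hs h3 hmem => hw ?_⟩
  simp only [Set.mem_iUnion]
  exact ⟨_, Finset.mem_image.2 ⟨s, Finset.mem_filter.2 ⟨Finset.mem_powerset.2 hs, h3⟩, rfl⟩, hmem⟩

/-- the octahedral parity in the abstract geometric setting -/
lemma geo_parity (P : Finset (Fin 4 → ℝ)) (w : Fin 4 → ℝ)
    (hw : ∀ s : Finset (Fin 4 → ℝ), s ⊆ P → s.card ≤ 3 →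
      w ∉ Submodule.span ℝ (s : Set (Fin 4 → ℝ)))
    (hli : ∀ s : Finset (Fin 4 → ℝ), s ⊆ P → s.card ≤ 4 → ∀ g : (Fin 4 → ℝ) → ℝ,
      ∑ v ∈ s, g v • v = 0 → ∀ v ∈ s, g v = 0)
    (x : Fin 5 → (Fin 4 → ℝ)) (hx : ∀ i, x i ∈ P) [DecidablePred (fun i => InCone w x i)] :
    (0 : Fin 4 → ℝ) ∈ convexHull ℝ (Set.range x) ↔
      Odd ((Finset.univ.filter (fun i => InCone w x i)).card) := by
  classical
  have := parityK w x (by simp) ?_ ?_ ?_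
  · convert this
  · intro c hc i j hij hi hj
    refine hw (((Finset.univ.erase i).erase j).image x) ?_ ?_ ?_
    · intro v hv
      obtain ⟨k, _, rfl⟩ := Finset.mem_image.1 hv
      exact hx k
    · refine Finset.card_image_le.trans ?_
      rw [Finset.card_erase_of_mem (by simp [hij.symm]), Finset.card_erase_of_mem (by simp)]
      simp
    · rw [← hc]
      apply Submodule.sum_mem
      intro k _
      by_cases hki : k = i
      · subst hki; simp [hi]
      by_cases hkj : k = j
      · subst hkj; simp [hj]
      apply Submodule.smul_mem
      apply Submodule.subset_span
      exact_mod_cast Finset.mem_image_of_mem x (by simp [hki, hkj])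
  · intro hinj a ha i hi
    have h := hli ((Finset.univ.erase i).image x) (by
      intro v hv
      obtain ⟨k, _, rfl⟩ := Finset.mem_image.1 hv
      exact hx k) (by
      refine Finset.card_image_le.trans ?_
      rw [Finset.card_erase_of_mem (by simp)]
      simp) (fun v => a (Function.invFun x v)) (by
      rw [Finset.sum_image (fun _ _ _ _ h => hinj h)]
      simp only [Function.leftInverse_invFun hinj _]
      rw [← Finset.add_sum_erase _ _ (Finset.mem_univ i), hi] at ha
      simpa using ha)
    funext k
    by_cases hk : k = i
    · subst hk; exact hi
    · have := h (x k) (Finset.mem_image_of_mem x (by simp [hk]))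
      simpa [Function.leftInverse_invFun hinj _] using this
  · intro hninj hmem
    have hr : Set.range x = ((Finset.univ.image x : Finset (Fin 4 → ℝ)) : Set (Fin 4 → ℝ)) := by
      simp
    rw [hr, Finset.mem_convexHull'] at hmem
    obtain ⟨b, _, hb1, hb2⟩ := hmem
    have hlt : (Finset.univ.image x).card < 5 := by
      refine lt_of_le_of_ne (by simpa using Finset.card_image_le (s := Finset.univ) (f := x)) ?_
      intro h
      apply hninj
      have := Finset.injOn_of_card_image_eq (s := Finset.univ) (f := x) (by simpa using h)
      simpa using this
    have := hli _ (by
      intro v hv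
      obtain ⟨k, _, rfl⟩ := Finset.mem_image.1 hv
      exact hx k) (by omega) b hb2
    rw [Finset.sum_eq_zero this] at hb1
    exact zero_ne_one hb1

end ColDepth

open ColDepth

/-- **μ(4) ≥ 14.**
Let `S 0, …, S 4` be five sets of five points each in `ℝ⁴` such that every
5-element subset of their union together with the origin is affinely independent
(general position), and such that the origin lies in the interior of the convex
hull of each `S i`.  Then the number of colourful simplices containing the
origin, i.e. the number of tuples `(x 0, …, x 4) ∈ S 0 × ⋯ × S 4` with
`0 ∈ conv {x 0, …, x 4}`, is at least `14`. -/
theorem mu_four_ge_fourteen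
    (S : Fin 5 → Finset (Fin 4 → ℝ))
    (hcard : ∀ i, (S i).card = 5)
    (hgen : ∀ s : Finset (Fin 4 → ℝ),
      (s : Set (Fin 4 → ℝ)) ⊆ (⋃ i, (S i : Set (Fin 4 → ℝ))) ∪ {0} →
      s.card = 5 →
      AffineIndependent ℝ (fun p : s => (p : Fin 4 → ℝ)))
    (hint : ∀ i, (0 : Fin 4 → ℝ) ∈ interior (convexHull ℝ (S i : Set (Fin 4 → ℝ)))) :
    14 ≤ Set.ncard {x : Fin 5 → (Fin 4 → ℝ) |
      (∀ i, x i ∈ S i) ∧ (0 : Fin 4 → ℝ) ∈ convexHull ℝ (Set.range x)} := by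
  classical
  -- zero is not a point
  have h0 : ∀ i, (0 : Fin 4 → ℝ) ∉ S i := by
    intro i
    refine zero_notMem (S i) (hgen _ ?_ (hcard i)) (hcard i) (hint i)
    intro v hv
    exact Or.inl (Set.mem_iUnion.2 ⟨i, hv⟩)
  set P : Finset (Fin 4 → ℝ) := Finset.univ.biUnion S with hP
  have hSP : ∀ i, S i ⊆ P := fun i v hv => Finset.mem_biUnion.2 ⟨i, Finset.mem_univ _, hv⟩
  have hli : ∀ s : Finset (Fin 4 → ℝ), s ⊆ P → s.card ≤ 4 → ∀ g : (Fin 4 → ℝ) → ℝ,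
      ∑ v ∈ s, g v • v = 0 → ∀ v ∈ s, g v = 0 := by
    intro s hs hs4 g hg v hv
    obtain ⟨s', h1, h2, h3⟩ := Finset.exists_subsuperset_card_eq hs hs4
      (by have := Finset.card_le_card (hSP 0); rw [hcard] at this; omega)
    have h0s : (0 : Fin 4 → ℝ) ∉ s' := by
      intro h
      obtain ⟨i, _, hi⟩ := Finset.mem_biUnion.1 (h2 h)
      exact h0 i hi
    have haff := hgen (insert 0 s') (by
      intro u hu
      rcases Finset.mem_insert.1 (Finset.mem_coe.1 hu) with rfl | hu
      · right; rfl
      · left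
        obtain ⟨i, _, hi⟩ := Finset.mem_biUnion.1 (h2 hu)
        exact Set.mem_iUnion.2 ⟨i, hi⟩) (by rw [Finset.card_insert_of_notMem h0s, h3])
    have := linindep_of_aff s' h0s haff (fun u => if u ∈ s then g u else 0) (by
      simp only [ite_smul, zero_smul]
      rw [← Finset.sum_filter, Finset.filter_mem_eq_inter, Finset.inter_eq_right.2 h1]
      exact hg) v (h1 hv)
    simpa [hv] using this
  -- indexing of the points
  let φ : Fin 5 → Fin 5 → (Fin 4 → ℝ) := fun i v => (((S i).equivFinOfCardEq (hcard i)).symm v : S i)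
  have hφS : ∀ i v, φ i v ∈ S i := fun i v => Subtype.coe_prop _
  have hφinj : ∀ i, Function.Injective (φ i) := fun i =>
    Subtype.val_injective.comp (Equiv.injective _)
  have hφsurj : ∀ i, ∀ u ∈ S i, ∃ v, φ i v = u := by
    intro i u hu
    exact ⟨(S i).equivFinOfCardEq (hcard i) ⟨u, hu⟩, by simp [φ]⟩
  let Φ : (Fin 5 → Fin 5) → (Fin 5 → (Fin 4 → ℝ)) := fun y i => φ i (y i)
  have hΦ : Function.Injective Φ := by
    intro y z h
    funext i
    exact hφinj i (congrFun h i)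
  let E : Finset (Fin 5 → Fin 5) :=
    Finset.univ.filter (fun y => (0 : Fin 4 → ℝ) ∈ convexHull ℝ (Set.range (Φ y)))
  have hset : {x : Fin 5 → (Fin 4 → ℝ) |
      (∀ i, x i ∈ S i) ∧ (0 : Fin 4 → ℝ) ∈ convexHull ℝ (Set.range x)} = Φ '' (E : Set _) := by
    ext x
    constructor
    · rintro ⟨h1, h2⟩
      choose y hy using fun i => hφsurj i (x i) (h1 i)
      have : Φ y = x := funext hy
      exact ⟨y, by simp [E, this, h2], this⟩
    · rintro ⟨y, hy, rfl⟩
      exact ⟨fun i => hφS i _, by simpa [E] using hy⟩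
  rw [hset, Set.ncard_image_of_injective _ hΦ, Set.ncard_coe_finset]
  apply comb
  · -- parity
    obtain ⟨w, hw⟩ := exists_generic P
    intro y z
    have := parityCube w (Φ y) (Φ z) (fun x => (0 : Fin 4 → ℝ) ∈ convexHull ℝ (Set.range x)) (by
      intro ω
      apply geo_parity P w hw hli
      intro i
      by_cases h : ω i
      · simpa [h] using hSP i (hφS i (y i))
      · simpa [h] using hSP i (hφS i (z i)))
    convert this using 3
    rename_i ω _
    have : Φ (fun i => if ω i then y i else z i) = fun i => if ω i then Φ y i else Φ z i := by
      funext i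
      by_cases h : ω i <;> simp [Φ, h]
    simp [E, this]
  · -- covering
    intro i0 v0
    let W := EuclideanSpace ℝ (Fin 4)
    let L : (Fin 4 → ℝ) ≃ₗ[ℝ] W := (WithLp.linearEquiv 2 ℝ (Fin 4 → ℝ)).symm
    obtain ⟨I, x, c, hI, hc, hq⟩ := carath (W := W) (by simp [W]) (fun i v => L (φ i v)) (by
      intro i r hr
      have hrr : 0 < inner ℝ r r := real_inner_self_pos.2 hr
      obtain ⟨u, hu, hu2⟩ := func_pos (S i) (hint i) ((innerₛₗ ℝ r).comp L.toLinearMap) (L.symm r)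
        (by simpa using hrr)
      obtain ⟨v, rfl⟩ := hφsurj i u hu
      exact ⟨v, by simpa using hu2⟩) i0 (L (- φ i0 v0))
    have hq' : - φ i0 v0 = ∑ k ∈ I, c k • φ k (x k) := by
      apply L.injective
      rw [hq]
      simp
    refine ⟨Function.update x i0 v0, ?_, by simp⟩
    simp only [E, Finset.mem_filter, Finset.mem_univ, true_and]
    rw [zero_mem_hull]
    refine ⟨fun k => if k = i0 then 1 else if k ∈ I then c k else 0, ?_, ?_, ?_⟩
    · intro k
      dsimp only
      split_ifs
      · exact zero_le_one
      · exact hc k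
      · exact le_rfl
    · intro h
      have := congrFun h i0
      simp at this
    · rw [← Finset.add_sum_erase _ _ (Finset.mem_univ i0)]
      have h1 : ∑ k ∈ Finset.univ.erase i0, (if k = i0 then (1 : ℝ) else if k ∈ I then c k else 0) •
          Φ (Function.update x i0 v0) k = ∑ k ∈ I, c k • φ k (x k) := by
        have hsub : I ⊆ Finset.univ.erase i0 := by
          intro k hk
          simp only [Finset.mem_erase, Finset.mem_univ, and_true]
          rintro rfl; exact hI hk
        rw [← Finset.sum_subset hsub]
        · apply Finset.sum_congr rfl
          intro k hk
          have : k ≠ i0 := by rintro rfl; exact hI hk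
          simp [this, hk, Φ]
        · intro k hk hkI
          have : k ≠ i0 := Finset.ne_of_mem_erase hk
          simp [this, hkI]
      rw [h1, ← hq']
      simp [Φ]
end

section
/- Every octahedral system without isolated vertex on 5 colour classes of 5 points each (d = 4) has at least 14 edges. That is, if E ⊆ (Fin 5 → Fin 5) is a finite set of colourful edges satisfying the octahedral parity property and such that every vertex (i, p) ∈ Fin 5 × Fin 5 belongs to some edge, then |E| ≥ 14. -/
namespace ColourfulDepth

/-- A colourful edge on `d+1` colour classes, each a copy of `Fin (d+1)`:
`e i` is the chosen point of colour `i`. -/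
abbrev Edge (d : ℕ) := Fin (d + 1) → Fin (d + 1)

/-- The number of edges of `H` using points from the `î`-octahedron `{t, t'}`
with `i`-th coordinate `s`. -/
def usesCount (d : ℕ) (H : Finset (Edge d)) (i : Fin (d + 1)) (t t' : Edge d)
    (s : Fin (d + 1)) : ℕ :=
  (H.filter (fun e => e i = s ∧ ∀ j, j ≠ i → (e j = t j ∨ e j = t' j))).card

/-- `H` is an octahedral system: for every colour `i`, every `î`-octahedron
`{t, t'}` (a pair of `î`-transversals with `t j ≠ t' j` for all `j ≠ i`), and
all `s, s'`, the numbers of edges using points from the octahedron with `i`-th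
coordinate `s` resp. `s'` have the same parity. -/
def IsOctahedralSystem (d : ℕ) (H : Finset (Edge d)) : Prop :=
  ∀ i : Fin (d + 1), ∀ t t' : Edge d, (∀ j, j ≠ i → t j ≠ t' j) →
    ∀ s s' : Fin (d + 1),
      usesCount d H i t t' s % 2 = usesCount d H i t t' s' % 2

/-- `H` has no isolated vertex: every point of every colour lies in some edge. -/
def NoIsolatedVertex (d : ℕ) (H : Finset (Edge d)) : Prop :=
  ∀ i p : Fin (d + 1), ∃ e ∈ H, e i = p

/-- The entry `T_H(t, x)` of the large table: the parity of the number of edges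
`e ∈ H` with `e 0 = x` and `e j ∈ {0, t j}` for all `j ≠ 0`. -/
def tableEntry (d : ℕ) (H : Finset (Edge d)) (t : Edge d) (x : Fin (d + 1)) : ZMod 2 :=
  ((H.filter (fun e => e 0 = x ∧ ∀ j, j ≠ 0 → (e j = 0 ∨ e j = t j))).card : ZMod 2)

/-- The score of `H`: the number of pairs `(t, x)` where `t` is a
`0̂`-transversal disjoint from `t₀ = (∗,0,…,0)` (normalized by `t 0 = 0`),
`x ≠ 0`, and the entry `T_H(t, x)` disagrees with `T_H(t, 0)`. -/
def score (d : ℕ) (H : Finset (Edge d)) : ℕ :=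
  (Finset.univ.filter (fun p : Edge d × Fin (d + 1) =>
    p.1 0 = 0 ∧ (∀ j, j ≠ 0 → p.1 j ≠ 0) ∧ p.2 ≠ 0 ∧
      tableEntry d H p.1 p.2 ≠ tableEntry d H p.1 0)).card

/-- `z(e)`: the number of coordinates of `e` equal to `0`. -/
def zcount (d : ℕ) (e : Edge d) : ℕ :=
  (Finset.univ.filter (fun i : Fin (d + 1) => e i = 0)).card

end ColourfulDepth

namespace OctAux

abbrev E := Fin 5 → Fin 5

/-- Link of the vertex `x` of colour `i`, normalised to have `i`-th coordinate `0`. -/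
def link (i x : Fin 5) (H : Finset E) : Finset E :=
  (H.filter (fun e => e i = x)).image (fun e => Function.update e i 0)

def Good (S : Finset (Fin 5)) (H : Finset E) : Prop :=
  (∀ e ∈ H, ∀ i, i ∉ S → e i = 0) ∧
  ∀ t t' : E, (∀ j ∈ S, t j ≠ t' j) →
    Even (H.filter (fun e => ∀ j ∈ S, e j = t j ∨ e j = t' j)).card

def Full (i : Fin 5) (H : Finset E) : Prop := ∀ x, ∃ e ∈ H, e i = x

lemma upd_injOn (i x : Fin 5) (H : Finset E) :
    Set.InjOn (fun e : E => Function.update e i 0) {e | e ∈ H ∧ e i = x} := by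
  intro a ha b hb hab
  funext j
  by_cases hj : j = i
  · subst hj; rw [ha.2, hb.2]
  · have := congrFun hab j
    simpa [Function.update_of_ne hj] using this

lemma mem_link (i x : Fin 5) (H : Finset E) (f : E) :
    f ∈ link i x H ↔ f i = 0 ∧ Function.update f i x ∈ H := by
  unfold link
  simp only [Finset.mem_image, Finset.mem_filter]
  constructor
  · rintro ⟨e, ⟨he, hx⟩, rfl⟩
    subst hx
    simp [he]
  · rintro ⟨h0, h⟩
    refine ⟨_, ⟨h, by simp⟩, ?_⟩
    rw [Function.update_idem, ← h0, Function.update_eq_self]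

lemma card_link (i x : Fin 5) (H : Finset E) :
    (link i x H).card = (H.filter (fun e => e i = x)).card := by
  unfold link
  apply Finset.card_image_of_injOn
  have := upd_injOn i x H
  simpa using this

lemma sum_link (i : Fin 5) (H : Finset E) : ∑ x, (link i x H).card = H.card := by
  simp only [card_link]
  exact (Finset.card_eq_sum_card_fiberwise (f := fun e : E => e i) (t := Finset.univ)
    (by intro x _; simp)).symm

lemma link_symmDiff (i x : Fin 5) (A B : Finset E) :
    link i x (symmDiff A B) = symmDiff (link i x A) (link i x B) := by
  ext f
  simp only [mem_link, Finset.mem_symmDiff]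
  tauto

lemma card_symmDiff_add (A B : Finset E) :
    (symmDiff A B).card + 2 * (A ∩ B).card = A.card + B.card := by
  have h1 := Finset.card_sdiff_add_card_inter A B
  have h2 := Finset.card_sdiff_add_card_inter B A
  have h3 : (symmDiff A B).card = (A \ B).card + (B \ A).card := by
    rw [symmDiff_def]
    exact Finset.card_union_of_disjoint disjoint_sdiff_sdiff
  rw [Finset.inter_comm B A] at h2
  omega

lemma filter_link_card (i x : Fin 5) (H : Finset E) (S : Finset (Fin 5)) (t t' : E) :
    ((link i x H).filter (fun e => ∀ j ∈ S.erase i, e j = t j ∨ e j = t' j)).card =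
    (H.filter (fun e => e i = x ∧ ∀ j ∈ S.erase i, e j = t j ∨ e j = t' j)).card := by
  unfold link
  rw [Finset.filter_image, Finset.card_image_of_injOn, Finset.filter_filter]
  · congr 1
    apply Finset.filter_congr
    intro e _
    refine and_congr_right fun _ => forall_congr' fun j => ?_
    refine imp_congr_right fun hj => ?_
    rw [Function.update_of_ne (Finset.ne_of_mem_erase hj)]
  · refine (upd_injOn i x H).mono ?_
    intro e he
    simp only [Finset.coe_filter, Finset.mem_filter, Set.mem_ofPred_eq] at he ⊢
    exact he.1

lemma good_link {S : Finset (Fin 5)} {H : Finset E} (hH : Good S H) {i : Fin 5} (hi : i ∈ S)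
    {x y : Fin 5} (hxy : x ≠ y) :
    Good (S.erase i) (symmDiff (link i x H) (link i y H)) := by
  constructor
  · have key : ∀ z, ∀ e ∈ link i z H, ∀ k, k ∉ S.erase i → e k = 0 := by
      intro z e he k hk
      rw [mem_link] at he
      by_cases hki : k = i
      · rw [hki]; exact he.1
      · have := hH.1 _ he.2 k (fun h => hk (Finset.mem_erase.2 ⟨hki, h⟩))
        rwa [Function.update_of_ne hki] at this
    intro e he
    rcases Finset.mem_symmDiff.1 he with h | h
    · exact key _ _ h.1
    · exact key _ _ h.1
  · intro t t' htt
    have h := hH.2 (Function.update t i x) (Function.update t' i y) (by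
      intro j hj
      by_cases hji : j = i
      · subst hji; simpa using hxy
      · simpa [Function.update_of_ne hji] using htt j (Finset.mem_erase.2 ⟨hji, hj⟩))
    have e1 : (H.filter (fun e => ∀ j ∈ S, e j = Function.update t i x j ∨
        e j = Function.update t' i y j)) =
        (H.filter (fun e => e i = x ∧ ∀ j ∈ S.erase i, e j = t j ∨ e j = t' j)) ∪
        (H.filter (fun e => e i = y ∧ ∀ j ∈ S.erase i, e j = t j ∨ e j = t' j)) := by
      rw [← Finset.filter_or]
      apply Finset.filter_congr
      intro e _
      rw [← or_and_right]
      constructor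
      · intro h
        refine ⟨by simpa using h i hi, fun j hj => ?_⟩
        have := h j (Finset.mem_of_mem_erase hj)
        simpa [Function.update_of_ne (Finset.ne_of_mem_erase hj)] using this
      · rintro ⟨h1, h2⟩ j hj
        by_cases hji : j = i
        · subst hji; simpa using h1
        · simpa [Function.update_of_ne hji] using h2 j (Finset.mem_erase.2 ⟨hji, hj⟩)
    rw [e1, Finset.card_union_of_disjoint, ← filter_link_card, ← filter_link_card] at h
    · have h2 := card_symmDiff_add
        ((link i x H).filter (fun e => ∀ j ∈ S.erase i, e j = t j ∨ e j = t' j))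
        ((link i y H).filter (fun e => ∀ j ∈ S.erase i, e j = t j ∨ e j = t' j))
      have h3 : (symmDiff (link i x H) (link i y H)).filter
          (fun e => ∀ j ∈ S.erase i, e j = t j ∨ e j = t' j) = symmDiff
        ((link i x H).filter (fun e => ∀ j ∈ S.erase i, e j = t j ∨ e j = t' j))
        ((link i y H).filter (fun e => ∀ j ∈ S.erase i, e j = t j ∨ e j = t' j)) := by
        ext f
        simp only [Finset.mem_symmDiff, Finset.mem_filter]
        tauto
      rw [h3]
      rw [← h2] at h
      rw [Nat.even_iff] at h ⊢
      omega
    · rw [Finset.disjoint_left]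
      intro e h1 h2
      rw [Finset.mem_filter] at h1 h2
      exact hxy (h1.2.1.symm.trans h2.2.1)

lemma good_link_of_empty {S : Finset (Fin 5)} {H : Finset E} (hH : Good S H) {i : Fin 5}
    (hi : i ∈ S) {x z : Fin 5} (hz : link i z H = ∅) (hx : (link i x H).Nonempty) :
    Good (S.erase i) (link i x H) := by
  have hxz : x ≠ z := by
    rintro rfl
    rw [hz] at hx
    simp at hx
  have := good_link hH hi hxz
  rw [hz] at this
  simpa [symmDiff_def] using this

lemma full_iff (i : Fin 5) (H : Finset E) : Full i H ↔ ∀ x, (link i x H).Nonempty := by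
  unfold Full
  refine forall_congr' fun x => ?_
  rw [← Finset.card_pos, card_link, Finset.card_pos]
  simp [Finset.Nonempty]

lemma five_le_of_full {i : Fin 5} {H : Finset E} (h : Full i H) : 5 ≤ H.card := by
  rw [full_iff] at h
  rw [← sum_link i H]
  calc 5 = ∑ x : Fin 5, 1 := by simp
    _ ≤ _ := Finset.sum_le_sum fun x _ => Finset.card_pos.2 (h x)

lemma card_link_le (i x : Fin 5) (H : Finset E) : (link i x H).card ≤ H.card := by
  rw [card_link]; exact Finset.card_filter_le _ _

lemma lemA (S : Finset (Fin 5)) : ∀ H : Finset E, Good S H → H.Nonempty → 5 ≤ H.card := by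
  induction S using Finset.induction_on with
  | empty =>
    intro H hH hne
    exfalso
    have h := hH.2 0 0 (by simp)
    have h1 : H = {0} := by
      apply Finset.eq_singleton_iff_nonempty_unique_mem.2 ⟨hne, ?_⟩
      intro e he
      funext i
      exact hH.1 e he i (by simp)
    simp [h1] at h
  | insert i S hi ih =>
    intro H hH hne
    by_cases hf : Full i H
    · exact five_le_of_full hf
    · rw [full_iff] at hf
      push Not at hf
      obtain ⟨z, hz⟩ := hf
      obtain ⟨e, he⟩ := hne
      have hx : (link i (e i) H).Nonempty :=
        ⟨Function.update e i 0, by rw [mem_link]; simpa using he⟩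
      have := good_link_of_empty hH (Finset.mem_insert_self i S) hz hx
      rw [Finset.erase_insert hi] at this
      exact (ih _ this hx).trans (card_link_le _ _ _)

/-- A vertex of nonzero degree in a colour having an isolated vertex has degree `≥ 5`. -/
lemma lemA' {S : Finset (Fin 5)} {H : Finset E} (hH : Good S H) {i : Fin 5}
    (hi : i ∈ S) (hf : ¬ Full i H) {x : Fin 5} (hx : (link i x H).Nonempty) :
    5 ≤ (link i x H).card := by
  rw [full_iff] at hf
  push Not at hf
  obtain ⟨z, hz⟩ := hf
  exact lemA _ _ (good_link_of_empty hH hi hz hx) hx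

lemma link_link_card_le (i y j p : Fin 5) (hij : j ≠ i) (H : Finset E) :
    (link j p (link i y H)).card ≤ (link j p H).card := by
  rw [card_link, card_link]
  apply Finset.card_le_card_of_injOn (fun e => Function.update e i y)
  · intro e he
    simp only [Finset.coe_filter, Set.mem_ofPred_eq, mem_link] at he ⊢
    refine ⟨he.1.2, ?_⟩
    rw [Function.update_of_ne hij]; exact he.2
  · intro a ha b hb hab
    simp only [Finset.coe_filter, Set.mem_ofPred_eq, mem_link] at ha hb
    funext k
    by_cases hk : k = i
    · subst hk; rw [ha.1.1, hb.1.1]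
    · have := congrFun hab k
      simpa [Function.update_of_ne hk] using this

/-- Core structural statement. -/
lemma core {S : Finset (Fin 5)} {H : Finset E} (hH : Good S H) {i j₀ : Fin 5} (hi : i ∈ S)
    (hj₀ : j₀ ≠ i) (hfi : Full i H) (hfj : Full j₀ H) (hcard : H.card ≤ 14) :
    ∃ (a : ℕ) (L : Finset (Fin 5)) (B : Fin 5 → Finset E),
      1 ≤ a ∧ a ≤ 2 ∧ 5 * a ≤ H.card ∧ 1 ≤ L.card ∧ L.card ≤ 4 ∧
      (∀ y ∈ L, Good (S.erase i) (B y)) ∧ (∀ y ∈ L, 5 ≤ (B y).card) ∧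
      (5 - L.card) * a + ∑ y ∈ L, ((B y).card - a) ≤ H.card ∧
      (∀ j ∈ S, j ≠ i → Full j H → H.card ≤ 13 → ∃ y ∈ L, Full j (B y)) := by
  obtain ⟨x, -, hx⟩ := Finset.exists_min_image (Finset.univ : Finset (Fin 5))
    (fun x => (link i x H).card) ⟨0, by simp⟩
  set A := link i x H with hA
  have hsum := sum_link i H
  have hApos : 1 ≤ A.card := Finset.card_pos.2 ((full_iff i H).1 hfi x)
  have h5a : 5 * A.card ≤ H.card := by
    rw [← hsum]
    calc 5 * A.card = ∑ y : Fin 5, A.card := by simp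
      _ ≤ _ := Finset.sum_le_sum fun y hy => hx y hy
  let L := Finset.univ.filter (fun y => link i y H ≠ A)
  have hxL : x ∉ L := by simp [L, hA]
  have hL4 : L.card ≤ 4 := by
    have : L ⊂ Finset.univ := (Finset.ssubset_univ_iff).2 (fun h => hxL (h ▸ Finset.mem_univ x))
    have := Finset.card_lt_card this
    simp at this
    omega
  have hLg : ∀ y ∈ L, Good (S.erase i) (symmDiff (link i y H) A) := by
    intro y hy
    exact good_link hH hi (fun h => hxL (h ▸ hy))
  have hL1 : 1 ≤ L.card := by
    by_contra hc
    have hL0 : L = ∅ := Finset.card_eq_zero.1 (by omega)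
    have hall : ∀ y, link i y H = A := by
      intro y
      by_contra h
      have : y ∈ L := by simp [L, h]
      rw [hL0] at this
      simp at this
    have : Full j₀ A := by
      intro p
      obtain ⟨e, he, hep⟩ := hfj p
      refine ⟨Function.update e i 0, ?_, ?_⟩
      · rw [← hall (e i), mem_link]
        simpa using he
      · rwa [Function.update_of_ne hj₀]
    have := five_le_of_full this
    omega
  refine ⟨A.card, L, fun y => symmDiff (link i y H) A, hApos, by omega, h5a, hL1, hL4, hLg, ?_, ?_, ?_⟩
  · intro y hy
    apply lemA _ _ (hLg y hy)
    rw [Finset.nonempty_iff_ne_empty]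
    intro h
    have : link i y H = A := symmDiff_eq_bot.1 h
    exact (Finset.mem_filter.1 hy).2 this
  · have h1 : ∑ y ∈ L, ((symmDiff (link i y H) A).card - A.card) ≤ ∑ y ∈ L, (link i y H).card := by
      apply Finset.sum_le_sum
      intro y _
      have := card_symmDiff_add (link i y H) A
      omega
    have h2 : ∑ y ∈ Lᶜ, (link i y H).card = (5 - L.card) * A.card := by
      rw [Finset.sum_congr rfl (g := fun _ => A.card)]
      · simp [Finset.card_compl]
      · intro y hy
        simp [L] at hy
        rw [hy]
    have h3 := Finset.sum_add_sum_compl L (fun y => (link i y H).card)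
    beta_reduce
    omega
  · intro j hj hji hfull h13
    by_contra hno
    push Not at hno
    -- the points of colour j not used by A
    have hA2 : A.card ≤ 2 := by omega
    let P := Finset.univ \ A.image (fun e => e j)
    have hP : 3 ≤ P.card := by
      have h1 := Finset.le_card_sdiff (A.image (fun e => e j)) (Finset.univ : Finset (Fin 5))
      have h2 : (A.image (fun e => e j)).card ≤ A.card := Finset.card_image_le
      simp only [Finset.card_univ, Fintype.card_fin] at h1
      change 3 ≤ (Finset.univ \ A.image (fun e => e j)).card
      omega
    have hP5 : ∀ p ∈ P, 5 ≤ (link j p H).card := by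
      intro p hp
      have hpA : ∀ e ∈ A, e j ≠ p := by
        intro e he h
        simp only [P, Finset.mem_sdiff, Finset.mem_image, not_exists, not_and] at hp
        exact hp.2 e he h
      have hlA : link j p A = ∅ := by
        rw [← Finset.card_eq_zero, card_link, Finset.card_eq_zero, Finset.filter_eq_empty_iff]
        intro e he
        exact hpA e he
      obtain ⟨e, he, hep⟩ := hfull p
      have hel : Function.update e i 0 ∈ link i (e i) H := by
        rw [mem_link]; simpa using he
      have hej : Function.update e i 0 j = p := by rwa [Function.update_of_ne hji]
      have hy : e i ∈ L := by
        simp only [L, Finset.mem_filter, Finset.mem_univ, true_and]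
        intro h
        rw [h] at hel
        exact hpA _ hel hej
      have hl : link j p (symmDiff (link i (e i) H) A) = link j p (link i (e i) H) := by
        rw [link_symmDiff, hlA]
        simp [symmDiff_def]
      have hne : (link j p (link i (e i) H)).Nonempty := by
        rw [← Finset.card_pos, card_link, Finset.card_pos]
        exact ⟨_, Finset.mem_filter.2 ⟨hel, hej⟩⟩
      have := lemA' (hLg _ hy) (Finset.mem_erase.2 ⟨hji, hj⟩) (hno _ hy) (x := p) (by rwa [hl])
      rw [hl] at this
      exact this.trans (link_link_card_le _ _ _ _ hji _)
    have h1 : ∑ p ∈ P, 5 ≤ ∑ p ∈ P, (link j p H).card := Finset.sum_le_sum hP5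
    have h2 : ∑ p ∈ P, (link j p H).card ≤ ∑ p, (link j p H).card :=
      Finset.sum_le_sum_of_subset (Finset.subset_univ _)
    rw [sum_link] at h2
    simp at h1
    omega

lemma sum_lower {L : Finset (Fin 5)} {B : Fin 5 → Finset E} {a : ℕ}
    (h : ∀ y ∈ L, 5 ≤ (B y).card) : L.card * (5 - a) ≤ ∑ y ∈ L, ((B y).card - a) := by
  rw [← smul_eq_mul]
  apply Finset.card_nsmul_le_sum
  intro y hy
  have := h y hy
  omega

lemma sum_lower' {L : Finset (Fin 5)} {B : Fin 5 → Finset E} {a m : ℕ}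
    (h : ∀ y ∈ L, 5 ≤ (B y).card) {z : Fin 5} (hz : z ∈ L) (hm : m ≤ (B z).card) :
    (L.card - 1) * (5 - a) + (m - a) ≤ ∑ y ∈ L, ((B y).card - a) := by
  rw [← Finset.sum_erase_add _ _ hz]
  have := sum_lower (L := L.erase z) (B := B) (a := a)
    (fun y hy => h y (Finset.mem_of_mem_erase hy))
  rw [Finset.card_erase_of_mem hz] at this
  omega

lemma lemB {S : Finset (Fin 5)} {H : Finset E} (hH : Good S H) {i j : Fin 5} (hi : i ∈ S)
    (hij : j ≠ i) (hfi : Full i H) (hfj : Full j H) : 8 ≤ H.card := by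
  by_contra hc
  obtain ⟨a, L, B, ha1, ha2, h5a, hL1, hL4, -, hB5, hsum, -⟩ :=
    core hH hi hij hfi hfj (by omega)
  have hs := sum_lower (a := a) hB5
  have : a = 1 := by omega
  subst this
  omega

lemma lemC {S : Finset (Fin 5)} {H : Finset E} (hH : Good S H) {i j k : Fin 5} (hi : i ∈ S)
    (hj : j ∈ S) (hk : k ∈ S)
    (hij : j ≠ i) (hik : k ≠ i) (hjk : k ≠ j)
    (hfi : Full i H) (hfj : Full j H) (hfk : Full k H) : 11 ≤ H.card := by
  by_contra hc
  obtain ⟨a, L, B, ha1, ha2, h5a, hL1, hL4, hg, hB5, hsum, hfull⟩ :=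
    core hH hi hij hfi hfj (by omega)
  have hs := sum_lower (a := a) hB5
  obtain rfl | rfl : a = 1 ∨ a = 2 := by omega
  · have hL : L.card = 1 := by omega
    obtain ⟨y, hy⟩ := Finset.card_eq_one.1 hL
    subst hy
    obtain ⟨y1, hy1, hF1⟩ := hfull j hj hij hfj (by omega)
    obtain ⟨y2, hy2, hF2⟩ := hfull k hk hik hfk (by omega)
    rw [Finset.mem_singleton] at hy1 hy2
    subst hy1
    subst hy2
    have := lemB (hg y2 (by simp)) (Finset.mem_erase.2 ⟨hij, hj⟩) hjk hF1 hF2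
    simp at hsum
    omega
  · omega

lemma main {H : Finset E} (hH : Good Finset.univ H) (hF : ∀ i, Full i H) : 14 ≤ H.card := by
  by_contra hc
  obtain ⟨a, L, B, ha1, ha2, h5a, hL1, hL4, hg, hB5, hsum, hfull⟩ :=
    core hH (i := 0) (j₀ := 1) (by simp) (by simp) (hF 0) (hF 1) (by omega)
  have hs := sum_lower (a := a) hB5
  have hB : ∀ y ∈ L, ∀ j k : Fin 5, j ≠ 0 → k ≠ j → Full j (B y) → Full k (B y) →
      8 ≤ (B y).card := fun y hy j k h0 h1 h2 h3 =>
    lemB (hg y hy) (Finset.mem_erase.2 ⟨h0, by simp⟩) h1 h2 h3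
  have hC : ∀ y ∈ L, ∀ j k l : Fin 5, j ≠ 0 → k ≠ 0 → l ≠ 0 → k ≠ j → l ≠ j → l ≠ k →
      Full j (B y) → Full k (B y) → Full l (B y) →
      11 ≤ (B y).card := fun y hy j k l h0 h1 h2 h3 h4 h5 f1 f2 f3 =>
    lemC (hg y hy) (Finset.mem_erase.2 ⟨h0, by simp⟩) (Finset.mem_erase.2 ⟨h1, by simp⟩)
      (Finset.mem_erase.2 ⟨h2, by simp⟩) h3 h4 h5 f1 f2 f3
  obtain ⟨y1, m1, F1⟩ := hfull 1 (by simp) (by decide) (hF 1) (by omega)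
  obtain ⟨y2, m2, F2⟩ := hfull 2 (by simp) (by decide) (hF 2) (by omega)
  obtain ⟨y3, m3, F3⟩ := hfull 3 (by simp) (by decide) (hF 3) (by omega)
  obtain ⟨y4, m4, F4⟩ := hfull 4 (by simp) (by decide) (hF 4) (by omega)
  have hL3 : L.card ≤ 3 := by
    obtain rfl | rfl : a = 1 ∨ a = 2 := by omega
    all_goals omega
  -- with at most two elements
  have c12 : y2 = y1 → 8 ≤ (B y1).card := by
    rintro rfl; exact hB _ m1 1 2 (by decide) (by decide) F1 F2
  have c13 : y3 = y1 → 8 ≤ (B y1).card := by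
    rintro rfl; exact hB _ m1 1 3 (by decide) (by decide) F1 F3
  have c14 : y4 = y1 → 8 ≤ (B y1).card := by
    rintro rfl; exact hB _ m1 1 4 (by decide) (by decide) F1 F4
  have c23 : y3 = y2 → 8 ≤ (B y2).card := by
    rintro rfl; exact hB _ m2 2 3 (by decide) (by decide) F2 F3
  have c24 : y4 = y2 → 8 ≤ (B y2).card := by
    rintro rfl; exact hB _ m2 2 4 (by decide) (by decide) F2 F4
  have c34 : y4 = y3 → 8 ≤ (B y3).card := by
    rintro rfl; exact hB _ m3 3 4 (by decide) (by decide) F3 F4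
  have c123 : y2 = y1 → y3 = y1 → 11 ≤ (B y1).card := by
    rintro rfl h; subst h
    exact hC _ m1 1 2 3 (by decide) (by decide) (by decide) (by decide) (by decide) (by decide) F1 F2 F3
  have c124 : y2 = y1 → y4 = y1 → 11 ≤ (B y1).card := by
    rintro rfl h; subst h
    exact hC _ m1 1 2 4 (by decide) (by decide) (by decide) (by decide) (by decide) (by decide) F1 F2 F4
  have c134 : y3 = y1 → y4 = y1 → 11 ≤ (B y1).card := by
    rintro rfl h; subst h
    exact hC _ m1 1 3 4 (by decide) (by decide) (by decide) (by decide) (by decide) (by decide) F1 F3 F4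
  have c234 : y3 = y2 → y4 = y2 → 11 ≤ (B y2).card := by
    rintro rfl h; subst h
    exact hC _ m2 2 3 4 (by decide) (by decide) (by decide) (by decide) (by decide) (by decide) F2 F3 F4
  clear hB hC hfull hg
  obtain hL | hL | hL : L.card = 1 ∨ L.card = 2 ∨ L.card = 3 := by omega
  · obtain ⟨y, rfl⟩ := Finset.card_eq_one.1 hL
    rw [Finset.mem_singleton] at m1 m2 m3 m4
    subst m1
    have := c123 m2 m3
    simp at hsum
    omega
  · obtain ⟨y, z, hyz, rfl⟩ := Finset.card_eq_two.1 hL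
    have hy := hB5 y (by simp)
    have hz := hB5 z (by simp)
    rw [Finset.sum_pair hyz, hL] at hsum
    simp only [Finset.mem_insert, Finset.mem_singleton] at m1 m2 m3 m4
    clear hF F1 F2 F3 F4 hB5 hs
    have : 16 ≤ (B y).card + (B z).card := by
      rcases m1 with rfl | rfl <;> rcases m2 with rfl | rfl <;> rcases m3 with rfl | rfl <;>
        rcases m4 with rfl | rfl <;> simp_all <;> omega
    omega
  · have : ∃ w ∈ L, 8 ≤ (B w).card := by
      by_contra hno
      push Not at hno
      have h1 := hno _ m1
      have h2 := hno _ m2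
      have h3 := hno _ m3
      have n12 : y2 ≠ y1 := fun h => absurd (c12 h) (by omega)
      have n13 : y3 ≠ y1 := fun h => absurd (c13 h) (by omega)
      have n14 : y4 ≠ y1 := fun h => absurd (c14 h) (by omega)
      have n23 : y3 ≠ y2 := fun h => absurd (c23 h) (by omega)
      have n24 : y4 ≠ y2 := fun h => absurd (c24 h) (by omega)
      have n34 : y4 ≠ y3 := fun h => absurd (c34 h) (by omega)
      have hsub : ({y4, y3, y2, y1} : Finset (Fin 5)) ⊆ L := by
        intro w hw
        simp only [Finset.mem_insert, Finset.mem_singleton] at hw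
        rcases hw with rfl | rfl | rfl | rfl <;> assumption
      have := Finset.card_le_card hsub
      rw [Finset.card_insert_of_notMem (by simp [*]), Finset.card_insert_of_notMem (by simp [*]),
        Finset.card_insert_of_notMem (by simp [*]), Finset.card_singleton] at this
      omega
    obtain ⟨w, hw, hw8⟩ := this
    have := sum_lower' (a := a) hB5 hw hw8
    rw [hL] at this hsum
    omega

end OctAux

open ColourfulDepth in
/-- **ν(4) ≥ 14.**  Every octahedral system without isolated vertex on five
colour classes of five points each (`d = 4`) has at least `14` edges. -/
theorem octahedral_system_dim_four_ge_fourteen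
    (H : Finset (Edge 4))
    (hoct : IsOctahedralSystem 4 H)
    (hniv : NoIsolatedVertex 4 H) :
    14 ≤ H.card := by
  refine OctAux.main ⟨fun e _ i hi => absurd (Finset.mem_univ i) hi, ?_⟩ hniv
  intro t t' htt
  have h := hoct 0 t t' (fun j _ => htt j (Finset.mem_univ j)) (t 0) (t' 0)
  unfold usesCount at h
  have e1 : (H.filter (fun e => ∀ j ∈ Finset.univ, e j = t j ∨ e j = t' j)) =
      (H.filter (fun e => e 0 = t 0 ∧ ∀ j, j ≠ 0 → (e j = t j ∨ e j = t' j))) ∪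
      (H.filter (fun e => e 0 = t' 0 ∧ ∀ j, j ≠ 0 → (e j = t j ∨ e j = t' j))) := by
    rw [← Finset.filter_or]
    apply Finset.filter_congr
    intro e _
    rw [← or_and_right]
    constructor
    · intro h
      exact ⟨h 0 (Finset.mem_univ _), fun j _ => h j (Finset.mem_univ _)⟩
    · rintro ⟨h1, h2⟩ j -
      by_cases hj : j = 0
      · subst hj; exact h1
      · exact h2 j hj
  rw [e1, Finset.card_union_of_disjoint, Nat.even_iff]
  · exact (Nat.even_iff.1 (Nat.even_add.2 (by rw [Nat.even_iff, Nat.even_iff]; exact Eq.congr_left h)))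
  · rw [Finset.disjoint_left]
    intro e h1 h2
    rw [Finset.mem_filter] at h1 h2
    exact htt 0 (Finset.mem_univ _) (h1.2.1.symm.trans h2.2.1)
end
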